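/- Let f : [ω₂]² → [ω₂]^{≤ω} satisfy f{α,β} ⊆ α ∩ β for all pairs. If p and p' are good twins in P_f, then their amalgamation r = p + p' is an element of P_f and is a common extension of p and p' (r ≤ p and r ≤ p'). -/

import Mathlib

attribute [local instance] Classical.propDecidable

noncomputable section

/-- The second uncountable cardinal ω₂, as an ordinal. -/
def omega2 : Ordinal := (Cardinal.aleph 2).ord

/-- The operation `x * y` on nonempty finite sets of ordinals with `max x ≠ max y`:
`x \ y` if `max x ∈ y`, `y \ x` if `max y ∈ x`, and `x ∩ y` otherwise. -/
def ostar (x y : Finset Ordinal) : Finset Ordinal :=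
  if ∃ m ∈ y, x.max = (m : WithBot Ordinal) then x \ y
  else if ∃ m ∈ x, y.max = (m : WithBot Ordinal) then y \ x
  else x ∩ y

/-- The conditions of the poset `P_f`: triples `(a, h, i)` where `a` is a finite
subset of ω₂, `h : a → 𝒫(a)` with `max (h ξ) = ξ`, `i : [a]² → 𝒫(a)` with
`i {ξ,η} ⊆ f {ξ,η}`, and `h ξ * h η ⊆ ⋃ {h ν : ν ∈ i {ξ,η}}`. -/
structure PfCond (f : Ordinal → Ordinal → Set Ordinal) where
  a : Finset Ordinal
  h : Ordinal → Finset Ordinal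
  i : Ordinal → Ordinal → Finset Ordinal
  a_lt : ∀ ξ ∈ a, ξ < omega2
  h_sub : ∀ ξ ∈ a, h ξ ⊆ a
  h_mem : ∀ ξ ∈ a, ξ ∈ h ξ
  h_le : ∀ ξ ∈ a, ∀ η ∈ h ξ, η ≤ ξ
  i_symm : ∀ ξ η, i ξ η = i η ξ
  i_sub_f : ∀ ξ ∈ a, ∀ η ∈ a, ξ ≠ η → ∀ ν ∈ i ξ η, ν ∈ f ξ η
  i_sub_a : ∀ ξ ∈ a, ∀ η ∈ a, ξ ≠ η → i ξ η ⊆ a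
  star_cond : ∀ ξ ∈ a, ∀ η ∈ a, ξ ≠ η → ostar (h ξ) (h η) ⊆ (i ξ η).biUnion h

/-- The order on `P_f`: `p ≤ q` iff `a^p ⊇ a^q`, `h^p(ξ) ∩ a^q = h^q(ξ)` for
`ξ ∈ a^q`, and `i^p` extends `i^q`. -/
def PfLe {f : Ordinal → Ordinal → Set Ordinal} (p q : PfCond f) : Prop :=
  q.a ⊆ p.a ∧ (∀ ξ ∈ q.a, p.h ξ ∩ q.a = q.h ξ) ∧
    ∀ ξ ∈ q.a, ∀ η ∈ q.a, ξ ≠ η → p.i ξ η = q.i ξ η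

/-- Two finite subsets `x` and `y` of ω₂ are good for `f`. -/
def GoodFor (f : Ordinal → Ordinal → Set Ordinal) (x y : Finset Ordinal) : Prop :=
  ∀ α ∈ x ∩ y, ∀ β ∈ x \ y, ∀ γ ∈ y \ x,
    ((α < β ∧ α < γ) → α ∈ f β γ) ∧
    (α < β → f α γ ⊆ f β γ) ∧
    (α < γ → f α β ⊆ f γ β)

/-- `p` and `p'` are good twins: the natural order preserving bijection between
`a^p` and `a^{p'}` is an isomorphism of the conditions fixing `a^p ∩ a^{p'}`,
`i` and `i'` agree on pairs from `a^p ∩ a^{p'}`, and `a^p`, `a^{p'}` are good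
for `f`. -/
def GoodTwins {f : Ordinal → Ordinal → Set Ordinal} (p p' : PfCond f) : Prop :=
  (∃ e : Ordinal → Ordinal,
    Set.BijOn e ↑p.a ↑p'.a ∧
    (∀ ξ ∈ p.a, ∀ η ∈ p.a, ξ < η → e ξ < e η) ∧
    (∀ ξ ∈ p.a ∩ p'.a, e ξ = ξ) ∧
    (∀ ξ ∈ p.a, p'.h (e ξ) = (p.h ξ).image e) ∧
    (∀ ξ ∈ p.a, ∀ η ∈ p.a, ξ ≠ η → p'.i (e ξ) (e η) = (p.i ξ η).image e)) ∧
  (∀ ξ ∈ p.a ∩ p'.a, ∀ η ∈ p.a ∩ p'.a, ξ ≠ η → p.i ξ η = p'.i ξ η) ∧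
  GoodFor f p.a p'.a

/-- `δ` is the ordinal `δ_η = min {δ ∈ a^p ∩ a^{p'} : η ∈ h^p(δ) ∪ h^{p'}(δ)}`. -/
def DeltaIs {f : Ordinal → Ordinal → Set Ordinal} (p p' : PfCond f)
    (η δ : Ordinal) : Prop :=
  δ ∈ p.a ∩ p'.a ∧ η ∈ p.h δ ∪ p'.h δ ∧
    ∀ δ' ∈ p.a ∩ p'.a, η ∈ p.h δ' ∪ p'.h δ' → δ ≤ δ'

theorem mem_ostar_iff {x y : Finset Ordinal} {ξ η z : Ordinal} (hne : ξ ≠ η)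
    (hξ : ξ ∈ x) (hxle : ∀ t ∈ x, t ≤ ξ) (hη : η ∈ y) (hyle : ∀ t ∈ y, t ≤ η) :
    z ∈ ostar x y ↔ (ξ ∈ y ∧ z ∈ x ∧ z ∉ y) ∨ (η ∈ x ∧ z ∈ y ∧ z ∉ x) ∨
      (ξ ∉ y ∧ η ∉ x ∧ z ∈ x ∧ z ∈ y) := by
  have max_eq : ∀ {s : Finset Ordinal} {m : Ordinal}, m ∈ s → (∀ t ∈ s, t ≤ m) →
      s.max = (m : WithBot Ordinal) := fun hm hle =>
    le_antisymm (Finset.max_le fun t ht => WithBot.coe_le_coe.2 (hle t ht)) (Finset.le_max hm)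
  have hy : (∃ m ∈ y, x.max = (m : WithBot Ordinal)) ↔ ξ ∈ y :=
    ⟨fun ⟨m, hm, he⟩ => WithBot.coe_injective ((max_eq hξ hxle).symm.trans he) ▸ hm,
      fun hm => ⟨ξ, hm, max_eq hξ hxle⟩⟩
  have hx : (∃ m ∈ x, y.max = (m : WithBot Ordinal)) ↔ η ∈ x :=
    ⟨fun ⟨m, hm, he⟩ => WithBot.coe_injective ((max_eq hη hyle).symm.trans he) ▸ hm,
      fun hm => ⟨η, hm, max_eq hη hyle⟩⟩
  have hboth : ¬ (ξ ∈ y ∧ η ∈ x) := fun hh =>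
    hne (le_antisymm (hyle _ hh.1) (hxle _ hh.2))
  unfold ostar
  simp only [hx, hy]
  split_ifs <;> simp <;> tauto

namespace PfCond

variable {f : Ordinal → Ordinal → Set Ordinal}

theorem exists_mem_of_diff (p : PfCond f) {ξ η z : Ordinal} (hξ : ξ ∈ p.a) (hη : η ∈ p.a)
    (hne : ξ ≠ η) (hmem : ξ ∈ p.h η) (hz : z ∈ p.h ξ) (hz' : z ∉ p.h η) :
    ∃ ν ∈ p.i ξ η, z ∈ p.h ν := by
  have key := p.star_cond ξ hξ η hη hne ((mem_ostar_iff hne (p.h_mem ξ hξ) (p.h_le ξ hξ)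
    (p.h_mem η hη) (p.h_le η hη)).2 (Or.inl ⟨hmem, hz, hz'⟩))
  simpa using key

theorem exists_mem_of_inter (p : PfCond f) {ξ η z : Ordinal} (hξ : ξ ∈ p.a) (hη : η ∈ p.a)
    (hne : ξ ≠ η) (h1 : ξ ∉ p.h η) (h2 : η ∉ p.h ξ) (hz : z ∈ p.h ξ) (hz' : z ∈ p.h η) :
    ∃ ν ∈ p.i ξ η, z ∈ p.h ν := by
  have key := p.star_cond ξ hξ η hη hne ((mem_ostar_iff hne (p.h_mem ξ hξ) (p.h_le ξ hξ)
    (p.h_mem η hη) (p.h_le η hη)).2 (Or.inr (Or.inr ⟨h1, h2, hz, hz'⟩)))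
  simpa using key

end PfCond

/-- The consequences of being good twins on which the amalgamation relies; unlike `GoodTwins`
it makes no mention of the isomorphism. -/
structure Coherent {f : Ordinal → Ordinal → Set Ordinal} (p p' : PfCond f) : Prop where
  h_iff : ∀ ξ ∈ p.a, ξ ∈ p'.a → ∀ η ∈ p.a, η ∈ p'.a → (η ∈ p.h ξ ↔ η ∈ p'.h ξ)
  i_eq : ∀ ξ ∈ p.a, ξ ∈ p'.a → ∀ η ∈ p.a, η ∈ p'.a → ξ ≠ η → p.i ξ η = p'.i ξ η
  mem_f : ∀ α ∈ p.a, α ∈ p'.a → ∀ β ∈ p.a, β ∉ p'.a → ∀ γ ∈ p'.a, γ ∉ p.a →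
    α < β → α < γ → α ∈ f β γ
  f_sub : ∀ α ∈ p.a, α ∈ p'.a → ∀ β ∈ p.a, β ∉ p'.a → ∀ γ ∈ p'.a, γ ∉ p.a →
    α < γ → f β α ⊆ f β γ
  f_sub' : ∀ α ∈ p.a, α ∈ p'.a → ∀ β ∈ p.a, β ∉ p'.a → ∀ γ ∈ p'.a, γ ∉ p.a →
    α < β → f α γ ⊆ f β γ

section Coherent

variable {f : Ordinal → Ordinal → Set Ordinal} {p p' : PfCond f}

theorem GoodTwins.coherent (hsymm : ∀ α β, f α β = f β α) (htw : GoodTwins p p') :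
    Coherent p p' := by
  obtain ⟨⟨e, hbij, -, hfix, hh, -⟩, hi, hgood⟩ := htw
  refine ⟨?_, ?_, ?_, ?_, ?_⟩
  · intro ξ hξ hξ' η hη hη'
    have h1 := hh ξ hξ
    have he := hfix ξ (by simp [hξ, hξ'])
    have he' := hfix η (by simp [hη, hη'])
    rw [he] at h1
    rw [h1, Finset.mem_image]
    constructor
    · exact fun hm => ⟨η, hm, he'⟩
    · rintro ⟨t, ht, hte⟩
      have : t = η := hbij.injOn (p.h_sub ξ hξ ht) hη (hte.trans he'.symm)
      exact this ▸ ht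
  · intro ξ hξ hξ' η hη hη' hne
    exact hi ξ (by simp [hξ, hξ']) η (by simp [hη, hη']) hne
  · intro α hα hα' β hβ hβ' γ hγ hγ' h1 h2
    exact (hgood α (by simp [*]) β (by simp [*]) γ (by simp [*])).1 ⟨h1, h2⟩
  · intro α hα hα' β hβ hβ' γ hγ hγ' h1
    rw [hsymm β α, hsymm β γ]
    exact (hgood α (by simp [*]) β (by simp [*]) γ (by simp [*])).2.2 h1
  · intro α hα hα' β hβ hβ' γ hγ hγ' h1
    exact (hgood α (by simp [*]) β (by simp [*]) γ (by simp [*])).2.1 h1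

theorem Coherent.symm (hsymm : ∀ α β, f α β = f β α) (hc : Coherent p p') :
    Coherent p' p where
  h_iff ξ hξ hξ' η hη hη' := (hc.h_iff ξ hξ' hξ η hη' hη).symm
  i_eq ξ hξ hξ' η hη hη' hne := (hc.i_eq ξ hξ' hξ η hη' hη hne).symm
  mem_f α hα hα' β hβ hβ' γ hγ hγ' h1 h2 := by
    rw [hsymm]; exact hc.mem_f α hα' hα γ hγ hγ' β hβ hβ' h2 h1
  f_sub α hα hα' β hβ hβ' γ hγ hγ' h1 := by
    rw [hsymm β α, hsymm β γ]; exact hc.f_sub' α hα' hα γ hγ hγ' β hβ hβ' h1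
  f_sub' α hα hα' β hβ hβ' γ hγ hγ' h1 := by
    rw [hsymm α γ, hsymm β γ]; exact hc.f_sub α hα' hα γ hγ hγ' β hβ hβ' h1

theorem DeltaIs.symm {η δ : Ordinal} (hd : DeltaIs p p' η δ) : DeltaIs p' p η δ := by
  obtain ⟨h1, h2, h3⟩ := hd
  refine ⟨by rwa [Finset.inter_comm], by rwa [Finset.union_comm], fun δ' h h' => ?_⟩
  exact h3 δ' (by rwa [Finset.inter_comm]) (by rwa [Finset.union_comm])

theorem deltaIs_comm {η δ : Ordinal} : DeltaIs p p' η δ ↔ DeltaIs p' p η δ :=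
  ⟨DeltaIs.symm, DeltaIs.symm⟩

theorem Coherent.mem_union_iff (hc : Coherent p p') {x δ : Ordinal} (hx : x ∈ p.a)
    (hδ : δ ∈ p.a) (hδ' : δ ∈ p'.a) : x ∈ p.h δ ∪ p'.h δ ↔ x ∈ p.h δ := by
  rw [Finset.mem_union, or_iff_left_iff_imp]
  exact fun h => (hc.h_iff δ hδ hδ' x hx (p'.h_sub δ hδ' h)).2 h

theorem Coherent.deltaIs_iff (hc : Coherent p p') {x δ : Ordinal} (hx : x ∈ p.a) :
    DeltaIs p p' x δ ↔ δ ∈ p.a ∧ δ ∈ p'.a ∧ x ∈ p.h δ ∧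
      ∀ δ' ∈ p.a, δ' ∈ p'.a → x ∈ p.h δ' → δ ≤ δ' := by
  unfold DeltaIs
  constructor
  · rintro ⟨h1, h2, h3⟩
    obtain ⟨h1, h1'⟩ := Finset.mem_inter.1 h1
    exact ⟨h1, h1', (hc.mem_union_iff hx h1 h1').1 h2, fun δ' h h' hm =>
      h3 δ' (Finset.mem_inter.2 ⟨h, h'⟩) ((hc.mem_union_iff hx h h').2 hm)⟩
  · rintro ⟨h1, h1', h2, h3⟩
    refine ⟨Finset.mem_inter.2 ⟨h1, h1'⟩, (hc.mem_union_iff hx h1 h1').2 h2, fun δ' h hm => ?_⟩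
    obtain ⟨h, h'⟩ := Finset.mem_inter.1 h
    exact h3 δ' h h' ((hc.mem_union_iff hx h h').1 hm)

theorem exists_deltaIs {x δ : Ordinal} (hδ : δ ∈ p.a) (hδ' : δ ∈ p'.a)
    (hx : x ∈ p.h δ ∪ p'.h δ) : ∃ ε ≤ δ, DeltaIs p p' x ε := by
  have hne : ((p.a ∩ p'.a).filter fun ε => x ∈ p.h ε ∪ p'.h ε).Nonempty :=
    ⟨δ, Finset.mem_filter.2 ⟨Finset.mem_inter.2 ⟨hδ, hδ'⟩, hx⟩⟩
  obtain ⟨ε, hε, hmin⟩ := Finset.exists_min_image _ id hne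
  rw [Finset.mem_filter] at hε
  exact ⟨ε, hmin δ (Finset.mem_filter.2 ⟨Finset.mem_inter.2 ⟨hδ, hδ'⟩, hx⟩), hε.1, hε.2,
    fun δ' h h' => hmin δ' (Finset.mem_filter.2 ⟨h, h'⟩)⟩

theorem Coherent.deltaIs_self (hc : Coherent p p') {x : Ordinal} (hx : x ∈ p.a)
    (hx' : x ∈ p'.a) : DeltaIs p p' x x :=
  (hc.deltaIs_iff hx).2 ⟨hx, hx', p.h_mem x hx, fun δ h _ hm => p.h_le δ h x hm⟩

theorem DeltaIs.unique {x δ ε : Ordinal} (h1 : DeltaIs p p' x δ) (h2 : DeltaIs p p' x ε) :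
    δ = ε :=
  le_antisymm (h1.2.2 ε h2.1 h2.2.1) (h2.2.2 δ h1.1 h1.2.1)

/-- On the common part of the two supports, `x ∈ h ξ` is decided by `δ_x`. -/
theorem Coherent.mem_h_iff (hc : Coherent p p')
    (hlt : ∀ α β γ, γ ∈ f α β → γ < α ∧ γ < β) {x ξ : Ordinal} (hx : x ∈ p.a)
    (hξ : ξ ∈ p.a) (hξ' : ξ ∈ p'.a) :
    x ∈ p.h ξ ↔ ∃ δ, DeltaIs p p' x δ ∧ δ ∈ p.h ξ := by
  have not_below : ∀ δ, DeltaIs p p' x δ → δ ≠ ξ → ∀ ν ∈ p.i δ ξ, x ∉ p.h ν := by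
    intro δ hd hne ν hν hxν
    obtain ⟨hδ, hδ', -, hmin⟩ := (hc.deltaIs_iff hx).1 hd
    have hνa := p.i_sub_a δ hδ ξ hξ hne hν
    have hνa' : ν ∈ p'.a := by
      rw [hc.i_eq δ hδ hδ' ξ hξ hξ' hne] at hν
      exact p'.i_sub_a δ hδ' ξ hξ' hne hν
    exact (hlt _ _ _ (p.i_sub_f δ hδ ξ hξ hne ν hν)).1.not_ge (hmin ν hνa hνa' hxν)
  constructor
  · intro hm
    obtain ⟨δ, hle, hd⟩ := exists_deltaIs hξ hξ' (Finset.mem_union_left (p'.h ξ) hm)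
    refine ⟨δ, hd, ?_⟩
    obtain ⟨hδ, hδ', hxδ, -⟩ := (hc.deltaIs_iff hx).1 hd
    by_contra hcon
    have hne : δ ≠ ξ := fun h => hcon (h ▸ p.h_mem δ hδ)
    obtain ⟨ν, hν, hxν⟩ := p.exists_mem_of_inter hδ hξ hne hcon
      (fun h => hne (le_antisymm hle (p.h_le δ hδ ξ h))) hxδ hm
    exact not_below δ hd hne ν hν hxν
  · rintro ⟨δ, hd, hm⟩
    obtain ⟨hδ, hδ', hxδ, -⟩ := (hc.deltaIs_iff hx).1 hd
    by_contra hcon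
    have hne : δ ≠ ξ := fun h => hcon (h ▸ hxδ)
    obtain ⟨ν, hν, hxν⟩ := p.exists_mem_of_diff hδ hξ hne hm hxδ hcon
    exact not_below δ hd hne ν hν hxν

end Coherent

/-- The half of the description of the amalgamated `h`-function `g` concerning its values
on the support of `p`. -/
structure ExtendsH {f : Ordinal → Ordinal → Set Ordinal} (p p' : PfCond f)
    (g : Ordinal → Finset Ordinal) : Prop where
  sub : ∀ ξ ∈ p.a, g ξ ⊆ p.a ∪ p'.a
  mem_iff : ∀ ξ ∈ p.a, ∀ x ∈ p.a, x ∈ g ξ ↔ x ∈ p.h ξ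
  mem_iff' : ∀ ξ ∈ p.a, ∀ x ∈ p'.a, x ∈ g ξ ↔ ∃ δ, DeltaIs p p' x δ ∧ δ ∈ p.h ξ

section ExtendsH

variable {f : Ordinal → Ordinal → Set Ordinal} {p p' : PfCond f} {g : Ordinal → Finset Ordinal}

theorem Coherent.extendsH (hc : Coherent p p') (hc' : Coherent p' p)
    (hlt : ∀ α β γ, γ ∈ f α β → γ < α ∧ γ < β)
    (hg1 : ∀ ξ ∈ p.a ∩ p'.a, g ξ = p.h ξ ∪ p'.h ξ)
    (hg2 : ∀ ξ ∈ p.a \ p'.a, g ξ = p.h ξ ∪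
      (p'.a \ p.a).filter (fun η => ∃ δ, DeltaIs p p' η δ ∧ δ ∈ p.h ξ)) :
    ExtendsH p p' g where
  sub ξ hξ x hx := by
    by_cases hξ' : ξ ∈ p'.a
    · rw [hg1 ξ (by simp [*])] at hx
      exact Finset.union_subset_union (p.h_sub ξ hξ) (p'.h_sub ξ hξ') hx
    · rw [hg2 ξ (by simp [*])] at hx
      simp only [Finset.mem_union, Finset.mem_filter, Finset.mem_sdiff] at hx ⊢
      exact hx.imp (fun h => p.h_sub ξ hξ h) fun h => h.1.1
  mem_iff ξ hξ x hx := by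
    by_cases hξ' : ξ ∈ p'.a
    · rw [hg1 ξ (by simp [*])]
      exact hc.mem_union_iff hx hξ hξ'
    · rw [hg2 ξ (by simp [*])]
      simp [hx]
  mem_iff' ξ hξ x hx := by
    by_cases hξ' : ξ ∈ p'.a
    · rw [hg1 ξ (by simp [*]), Finset.union_comm, hc'.mem_union_iff hx hξ' hξ,
        hc'.mem_h_iff hlt hx hξ' hξ]
      refine exists_congr fun δ => ?_
      rw [deltaIs_comm, and_congr_right_iff]
      intro hd
      obtain ⟨h1, h2⟩ := Finset.mem_inter.1 hd.1
      exact hc'.h_iff ξ hξ' hξ δ h2 h1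
    · rw [hg2 ξ (by simp [*])]
      by_cases hxa : x ∈ p.a
      · simp only [Finset.mem_union, Finset.mem_filter, Finset.mem_sdiff, hxa, not_true_eq_false,
          and_false, false_and, or_false]
        have hself := hc.deltaIs_self hxa hx
        exact ⟨fun h => ⟨x, hself, h⟩, fun ⟨δ, hd, hm⟩ => (hself.unique hd) ▸ hm⟩
      · have : x ∉ p.h ξ := fun h => hxa (p.h_sub ξ hξ h)
        simp [hx, hxa, this]

theorem ExtendsH.le (hE : ExtendsH p p' g) (hc' : Coherent p' p) {ξ x : Ordinal}
    (hξ : ξ ∈ p.a) (hx : x ∈ g ξ) : x ≤ ξ := by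
  rcases Finset.mem_union.1 (hE.sub ξ hξ hx) with hxa | hxa
  · exact p.h_le ξ hξ x ((hE.mem_iff ξ hξ x hxa).1 hx)
  · obtain ⟨δ, hd, hm⟩ := (hE.mem_iff' ξ hξ x hxa).1 hx
    obtain ⟨hδ, -, hxδ, -⟩ := (hc'.deltaIs_iff hxa).1 hd.symm
    exact (p'.h_le δ hδ x hxδ).trans (p.h_le ξ hξ δ hm)

theorem ExtendsH.self_mem (hE : ExtendsH p p' g) {ξ : Ordinal} (hξ : ξ ∈ p.a) : ξ ∈ g ξ :=
  (hE.mem_iff ξ hξ ξ hξ).2 (p.h_mem ξ hξ)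

/-- Every `x` belongs to `g δ_x`. -/
theorem ExtendsH.mem_of_deltaIs (hE : ExtendsH p p' g) (hE' : ExtendsH p' p g) {x δ : Ordinal}
    (hd : DeltaIs p p' x δ) : x ∈ g δ := by
  obtain ⟨hδ, hδ'⟩ := Finset.mem_inter.1 hd.1
  rcases Finset.mem_union.1 hd.2.1 with h | h
  · exact (hE.mem_iff δ hδ x (p.h_sub δ hδ h)).2 h
  · exact (hE'.mem_iff δ hδ' x (p'.h_sub δ hδ' h)).2 h

theorem ExtendsH.star_cond_left (hE : ExtendsH p p' g) (hc' : Coherent p' p) {ξ η : Ordinal}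
    (hξ : ξ ∈ p.a) (hη : η ∈ p.a) (hne : ξ ≠ η) :
    ostar (g ξ) (g η) ⊆ (p.i ξ η).biUnion g := by
  intro x hx
  rw [mem_ostar_iff hne (hE.self_mem hξ) (fun _ => hE.le hc' hξ) (hE.self_mem hη)
    (fun _ => hE.le hc' hη), hE.mem_iff η hη ξ hξ, hE.mem_iff ξ hξ η hη] at hx
  have cover : ∀ y, ((ξ ∈ p.h η ∧ y ∈ p.h ξ ∧ y ∉ p.h η) ∨
      (η ∈ p.h ξ ∧ y ∈ p.h η ∧ y ∉ p.h ξ) ∨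
      (ξ ∉ p.h η ∧ η ∉ p.h ξ ∧ y ∈ p.h ξ ∧ y ∈ p.h η)) → ∃ ν ∈ p.i ξ η, y ∈ p.h ν := by
    intro y hy
    simpa using p.star_cond ξ hξ η hη hne ((mem_ostar_iff hne (p.h_mem ξ hξ) (p.h_le ξ hξ)
      (p.h_mem η hη) (p.h_le η hη)).2 hy)
  rw [Finset.mem_biUnion]
  have hi := p.i_sub_a ξ hξ η hη hne
  have hxb : x ∈ p.a ∪ p'.a := by
    rcases hx with hx | hx | hx
    · exact hE.sub ξ hξ hx.2.1
    · exact hE.sub η hη hx.2.1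
    · exact hE.sub ξ hξ hx.2.2.1
  rcases Finset.mem_union.1 hxb with hxa | hxa
  · rw [hE.mem_iff ξ hξ x hxa, hE.mem_iff η hη x hxa] at hx
    obtain ⟨ν, hν, hxν⟩ := cover x hx
    exact ⟨ν, hν, (hE.mem_iff ν (hi hν) x hxa).2 hxν⟩
  · obtain ⟨δ, hd⟩ : ∃ δ, DeltaIs p p' x δ := by
      rw [hE.mem_iff' ξ hξ x hxa, hE.mem_iff' η hη x hxa] at hx
      rcases hx with ⟨-, ⟨δ, hd, -⟩, -⟩ | ⟨-, ⟨δ, hd, -⟩, -⟩ | ⟨-, -, ⟨δ, hd, -⟩, -⟩ <;>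
        exact ⟨δ, hd⟩
    have mem_g : ∀ ζ ∈ p.a, x ∈ g ζ ↔ δ ∈ p.h ζ := fun ζ hζ => by
      rw [hE.mem_iff' ζ hζ x hxa]
      exact ⟨fun ⟨ε, he, hm⟩ => (hd.unique he) ▸ hm, fun hm => ⟨δ, hd, hm⟩⟩
    rw [mem_g ξ hξ, mem_g η hη] at hx
    obtain ⟨ν, hν, hxν⟩ := cover δ hx
    exact ⟨ν, hν, (mem_g ν (hi hν)).2 hxν⟩

theorem ExtendsH.cross_cover (hE : ExtendsH p p' g) (hc : Coherent p p') {ξ η ζ x : Ordinal}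
    (hξ : ξ ∈ p.a) (hξ' : ξ ∉ p'.a) (hη : η ∈ p'.a) (hη' : η ∉ p.a) (hx : x ∈ p.a)
    (hζ : ζ ∈ p.a) (hζ' : ζ ∈ p'.a) (hlt : ζ < η)
    (hν : ∃ ν ∈ p.i ξ ζ, x ∈ p.h ν) : ∃ ν ∈ p.a ∪ p'.a, ν ∈ f ξ η ∧ x ∈ g ν := by
  obtain ⟨ν, hν, hxν⟩ := hν
  have hne : ξ ≠ ζ := fun h => hξ' (h ▸ hζ')
  have hνa := p.i_sub_a ξ hξ ζ hζ hne hν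
  exact ⟨ν, Finset.mem_union_left _ hνa,
    hc.f_sub ζ hζ hζ' ξ hξ hξ' η hη hη' hlt (p.i_sub_f ξ hξ ζ hζ hne ν hν),
    (hE.mem_iff ν hνa x hx).2 hxν⟩

theorem ExtendsH.cross_inter (hE : ExtendsH p p' g) (hE' : ExtendsH p' p g)
    (hc : Coherent p p') {ξ η x : Ordinal}
    (hξ : ξ ∈ p.a) (hξ' : ξ ∉ p'.a) (hη : η ∈ p'.a) (hη' : η ∉ p.a) (hx : x ∈ p.a)
    (hξη : ξ ∉ g η) (hxξ : x ∈ g ξ) (hxη : x ∈ g η) :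
    ∃ ν ∈ p.a ∪ p'.a, ν ∈ f ξ η ∧ x ∈ g ν := by
  rw [hE.mem_iff ξ hξ x hx] at hxξ
  rw [hE'.mem_iff' η hη x hx] at hxη
  obtain ⟨δ, hd, hδη⟩ := hxη
  have hd := hd.symm
  obtain ⟨hδ, hδ', hxδ, -⟩ := (hc.deltaIs_iff hx).1 hd
  have hltη : δ < η := lt_of_le_of_ne (p'.h_le η hη δ hδη) fun h => hη' (h ▸ hδ)
  have hne : ξ ≠ δ := fun h => hξ' (h ▸ hδ')
  rcases lt_or_gt_of_ne hne with hlt | hlt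
  · by_cases hξδ : ξ ∈ p.h δ
    · obtain ⟨ε, hle, he⟩ := exists_deltaIs hδ hδ' (Finset.mem_union_left (p'.h δ) hξδ)
      obtain ⟨hε, hε', hξε, -⟩ := (hc.deltaIs_iff hξ).1 he
      have hεδ : ε ≠ δ := by
        rintro rfl
        exact hξη ((hE'.mem_iff' η hη ξ hξ).2 ⟨ε, he.symm, hδη⟩)
      have hxε : x ∉ p.h ε := fun h => hεδ (le_antisymm hle
        (((hc.deltaIs_iff hx).1 hd).2.2.2 ε hε hε' h))
      exact hE.cross_cover hc hξ hξ' hη hη' hx hε hε' (hle.trans_lt hltη)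
        (p.exists_mem_of_diff hξ hε (fun h => hξ' (h ▸ hε')) hξε hxξ hxε)
    · exact hE.cross_cover hc hξ hξ' hη hη' hx hδ hδ' hltη
        (p.exists_mem_of_inter hξ hδ hne hξδ (fun h => (p.h_le ξ hξ δ h).not_gt hlt) hxξ hxδ)
  · exact ⟨δ, Finset.mem_union_left _ hδ, hc.mem_f δ hδ hδ' ξ hξ hξ' η hη hη' hlt hltη,
      hE.mem_of_deltaIs hE' hd⟩

theorem ExtendsH.cross_diff (hE : ExtendsH p p' g) (hE' : ExtendsH p' p g)
    (hc : Coherent p p') {ξ η x : Ordinal}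
    (hξ : ξ ∈ p.a) (hξ' : ξ ∉ p'.a) (hη : η ∈ p'.a) (hη' : η ∉ p.a)
    (hξη : ξ ∈ g η) (hxξ : x ∈ g ξ) (hxη : x ∉ g η) :
    ∃ ν ∈ p.a ∪ p'.a, ν ∈ f ξ η ∧ x ∈ g ν := by
  obtain ⟨δ, hd, hδη⟩ := (hE'.mem_iff' η hη ξ hξ).1 hξη
  have hd := hd.symm
  obtain ⟨hδ, hδ', hξδ, hmin⟩ := (hc.deltaIs_iff hξ).1 hd
  have hltη : δ < η := lt_of_le_of_ne (p'.h_le η hη δ hδη) fun h => hη' (h ▸ hδ)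
  have hne : ξ ≠ δ := fun h => hξ' (h ▸ hδ')
  have hltδ : ξ < δ := lt_of_le_of_ne (p.h_le δ hδ ξ hξδ) hne
  have of_delta_lt : ∀ ε, DeltaIs p p' x ε → ε < ξ →
      ∃ ν ∈ p.a ∪ p'.a, ν ∈ f ξ η ∧ x ∈ g ν := by
    intro ε he hlt
    obtain ⟨hε, hε'⟩ := Finset.mem_inter.1 he.1
    exact ⟨ε, Finset.mem_union_left _ hε, hc.mem_f ε hε hε' ξ hξ hξ' η hη hη' hlt
      (hlt.trans (hltδ.trans hltη)), hE.mem_of_deltaIs hE' he⟩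
  rcases Finset.mem_union.1 (hE.sub ξ hξ hxξ) with hx | hx
  · rw [hE.mem_iff ξ hξ x hx] at hxξ
    by_cases hxδ : x ∈ p.h δ
    · obtain ⟨ε, hle, he⟩ := exists_deltaIs hδ hδ' (Finset.mem_union_left (p'.h δ) hxδ)
      obtain ⟨hε, hε', hxε, -⟩ := (hc.deltaIs_iff hx).1 he
      have hεδ : ε ≠ δ := by
        rintro rfl
        exact hxη ((hE'.mem_iff' η hη x hx).2 ⟨ε, he.symm, hδη⟩)
      have hξε : ξ ≠ ε := fun h => hξ' (h ▸ hε')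
      rcases lt_or_gt_of_ne hξε with hlt | hlt
      · exact hE.cross_cover hc hξ hξ' hη hη' hx hε hε' (hle.trans_lt hltη)
          (p.exists_mem_of_inter hξ hε hξε
            (fun h => hεδ (le_antisymm hle (hmin ε hε hε' h)))
            (fun h => (p.h_le ξ hξ ε h).not_gt hlt) hxξ hxε)
      · exact of_delta_lt ε he hlt
    · exact hE.cross_cover hc hξ hξ' hη hη' hx hδ hδ' hltη
        (p.exists_mem_of_diff hξ hδ hne hξδ hxξ hxδ)
  · obtain ⟨ε, he, hεξ⟩ := (hE.mem_iff' ξ hξ x hx).1 hxξ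
    refine of_delta_lt ε he (lt_of_le_of_ne (p.h_le ξ hξ ε hεξ) fun h => hξ' ?_)
    exact h ▸ (Finset.mem_inter.1 he.1).2

theorem ExtendsH.cross_star_cond (hsymm : ∀ α β, f α β = f β α)
    (hE : ExtendsH p p' g) (hE' : ExtendsH p' p g) (hc : Coherent p p') {ξ η : Ordinal}
    (hξ : ξ ∈ p.a) (hξ' : ξ ∉ p'.a) (hη : η ∈ p'.a) (hη' : η ∉ p.a) :
    ostar (g ξ) (g η) ⊆ ((p.a ∪ p'.a).filter (fun ν => ν ∈ f ξ η)).biUnion g := by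
  intro x hx
  have hc' := hc.symm hsymm
  have hne : ξ ≠ η := fun h => hη' (h ▸ hξ)
  rw [mem_ostar_iff hne (hE.self_mem hξ) (fun _ => hE.le hc' hξ) (hE'.self_mem hη)
    (fun _ => hE'.le hc hη)] at hx
  have swap : (∃ ν ∈ p'.a ∪ p.a, ν ∈ f η ξ ∧ x ∈ g ν) →
      ∃ ν ∈ p.a ∪ p'.a, ν ∈ f ξ η ∧ x ∈ g ν := by
    rw [hsymm, Finset.union_comm]; exact id
  have key : ∃ ν ∈ p.a ∪ p'.a, ν ∈ f ξ η ∧ x ∈ g ν := by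
    rcases hx with ⟨h1, h2, h3⟩ | ⟨h1, h2, h3⟩ | ⟨h1, h2, h3, h4⟩
    · exact hE.cross_diff hE' hc hξ hξ' hη hη' h1 h2 h3
    · exact swap (hE'.cross_diff hE hc' hη hη' hξ hξ' h1 h2 h3)
    · rcases Finset.mem_union.1 (hE.sub ξ hξ h3) with hxa | hxa
      · exact hE.cross_inter hE' hc hξ hξ' hη hη' hxa h1 h3 h4
      · exact swap (hE'.cross_inter hE hc' hη hη' hξ hξ' hxa h2 h4 h3)
  obtain ⟨ν, hν, hνf, hxν⟩ := key
  exact Finset.mem_biUnion.2 ⟨ν, Finset.mem_filter.2 ⟨hν, hνf⟩, hxν⟩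

end ExtendsH

theorem stmt11
    (f : Ordinal → Ordinal → Set Ordinal)
    (hsymm : ∀ α β, f α β = f β α)
    (hlt : ∀ α β γ, γ ∈ f α β → γ < α ∧ γ < β)
    (hcount : ∀ α β, (f α β).Countable)
    (p p' : PfCond f) (htw : GoodTwins p p')
    (g : Ordinal → Finset Ordinal) (j : Ordinal → Ordinal → Finset Ordinal)
    (hg1 : ∀ ξ ∈ p.a ∩ p'.a, g ξ = p.h ξ ∪ p'.h ξ)
    (hg2 : ∀ ξ ∈ p.a \ p'.a, g ξ = p.h ξ ∪
      (p'.a \ p.a).filter (fun η => ∃ δ, DeltaIs p p' η δ ∧ δ ∈ p.h ξ))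
    (hg3 : ∀ ξ ∈ p'.a \ p.a, g ξ = p'.h ξ ∪
      (p.a \ p'.a).filter (fun η => ∃ δ, DeltaIs p p' η δ ∧ δ ∈ p'.h ξ))
    (hj1 : ∀ ξ ∈ p.a, ∀ η ∈ p.a, ξ ≠ η → j ξ η = p.i ξ η)
    (hj2 : ∀ ξ ∈ p'.a, ∀ η ∈ p'.a, ξ ≠ η → j ξ η = p'.i ξ η)
    (hj3 : ∀ ξ η, ξ ∈ p.a ∪ p'.a → η ∈ p.a ∪ p'.a →
      ¬ (ξ ∈ p.a ∧ η ∈ p.a) → ¬ (ξ ∈ p'.a ∧ η ∈ p'.a) →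
      j ξ η = (p.a ∪ p'.a).filter (fun ν => ν ∈ f ξ η)) :
    ∃ r : PfCond f, r.a = p.a ∪ p'.a ∧
      (∀ ξ ∈ r.a, r.h ξ = g ξ) ∧
      (∀ ξ ∈ r.a, ∀ η ∈ r.a, ξ ≠ η → r.i ξ η = j ξ η) ∧
      PfLe r p ∧ PfLe r p' := by
  have hc : Coherent p p' := htw.coherent hsymm
  have hc' : Coherent p' p := hc.symm hsymm
  have hE : ExtendsH p p' g := hc.extendsH hc' hlt hg1 hg2
  have hE' : ExtendsH p' p g := by
    refine hc'.extendsH hc hlt (fun ξ hξ => ?_) fun ξ hξ => ?_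
    · rw [hg1 ξ (by rwa [Finset.inter_comm]), Finset.union_comm]
    · simp only [hg3 ξ hξ, deltaIs_comm (p := p) (p' := p')]
  have pair_cases : ∀ ξ ∈ p.a ∪ p'.a, ∀ η ∈ p.a ∪ p'.a,
      (ξ ∈ p.a ∧ η ∈ p.a) ∨ (ξ ∈ p'.a ∧ η ∈ p'.a) ∨
      (ξ ∈ p.a ∧ ξ ∉ p'.a ∧ η ∈ p'.a ∧ η ∉ p.a) ∨
      (ξ ∈ p'.a ∧ ξ ∉ p.a ∧ η ∈ p.a ∧ η ∉ p'.a) := by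
    intro ξ hξ η hη
    rw [Finset.mem_union] at hξ hη
    tauto
  have hj_cross : ∀ ξ ∈ p.a ∪ p'.a, ∀ η ∈ p.a ∪ p'.a,
      (ξ ∈ p.a ∧ ξ ∉ p'.a ∧ η ∈ p'.a ∧ η ∉ p.a) ∨
      (ξ ∈ p'.a ∧ ξ ∉ p.a ∧ η ∈ p.a ∧ η ∉ p'.a) →
      j ξ η = (p.a ∪ p'.a).filter (fun ν => ν ∈ f ξ η) :=
    fun ξ hξ η hη h => hj3 ξ η hξ hη (by tauto) (by tauto)
  have hj_symm : ∀ ξ ∈ p.a ∪ p'.a, ∀ η ∈ p.a ∪ p'.a, ξ ≠ η → j ξ η = j η ξ := by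
    intro ξ hξ η hη hne
    rcases pair_cases ξ hξ η hη with ⟨h1, h2⟩ | ⟨h1, h2⟩ | h
    · rw [hj1 ξ h1 η h2 hne, hj1 η h2 ξ h1 hne.symm, p.i_symm]
    · rw [hj2 ξ h1 η h2 hne, hj2 η h2 ξ h1 hne.symm, p'.i_symm]
    · rw [hj_cross ξ hξ η hη h, hj_cross η hη ξ hξ (by tauto), hsymm]
  have hj_spec : ∀ ξ ∈ p.a ∪ p'.a, ∀ η ∈ p.a ∪ p'.a, ξ ≠ η →
      (∀ ν ∈ j ξ η, ν ∈ f ξ η) ∧ j ξ η ⊆ p.a ∪ p'.a ∧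
      ostar (g ξ) (g η) ⊆ (j ξ η).biUnion g := by
    intro ξ hξ η hη hne
    rcases pair_cases ξ hξ η hη with ⟨h1, h2⟩ | ⟨h1, h2⟩ | h
    · rw [hj1 ξ h1 η h2 hne]
      exact ⟨p.i_sub_f ξ h1 η h2 hne,
        (p.i_sub_a ξ h1 η h2 hne).trans Finset.subset_union_left,
        hE.star_cond_left hc' h1 h2 hne⟩
    · rw [hj2 ξ h1 η h2 hne]
      exact ⟨p'.i_sub_f ξ h1 η h2 hne,
        (p'.i_sub_a ξ h1 η h2 hne).trans Finset.subset_union_right,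
        hE'.star_cond_left hc h1 h2 hne⟩
    · rw [hj_cross ξ hξ η hη h]
      refine ⟨fun ν hν => (Finset.mem_filter.1 hν).2, Finset.filter_subset _ _, ?_⟩
      rcases h with ⟨h1, h2, h3, h4⟩ | ⟨h1, h2, h3, h4⟩
      · exact hE.cross_star_cond hsymm hE' hc h1 h2 h3 h4
      · rw [Finset.union_comm]
        exact hE'.cross_star_cond hsymm hE hc' h1 h2 h3 h4
  let k : Ordinal → Ordinal → Finset Ordinal := fun ξ η =>
    if (ξ ∈ p.a ∨ ξ ∈ p'.a) ∧ (η ∈ p.a ∨ η ∈ p'.a) ∧ ξ ≠ η then j ξ η else ∅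
  have hk : ∀ ξ ∈ p.a ∪ p'.a, ∀ η ∈ p.a ∪ p'.a, ξ ≠ η → k ξ η = j ξ η :=
    fun ξ hξ η hη hne => if_pos ⟨Finset.mem_union.1 hξ, Finset.mem_union.1 hη, hne⟩
  refine ⟨{ a := p.a ∪ p'.a, h := g, i := k, a_lt := ?_, h_sub := ?_, h_mem := ?_, h_le := ?_,
            i_symm := ?_, i_sub_f := ?_, i_sub_a := ?_, star_cond := ?_ },
    rfl, fun _ _ => rfl, hk, ⟨Finset.subset_union_left, ?_, ?_⟩,
    ⟨Finset.subset_union_right, ?_, ?_⟩⟩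
  · intro ξ hξ
    exact (Finset.mem_union.1 hξ).elim (p.a_lt ξ) (p'.a_lt ξ)
  · intro ξ hξ
    rcases Finset.mem_union.1 hξ with h | h
    · exact hE.sub ξ h
    · rw [Finset.union_comm]
      exact hE'.sub ξ h
  · intro ξ hξ
    exact (Finset.mem_union.1 hξ).elim hE.self_mem hE'.self_mem
  · intro ξ hξ η hη
    exact (Finset.mem_union.1 hξ).elim (fun h => hE.le hc' h hη) fun h => hE'.le hc h hη
  · intro ξ η
    by_cases h : (ξ ∈ p.a ∨ ξ ∈ p'.a) ∧ (η ∈ p.a ∨ η ∈ p'.a) ∧ ξ ≠ η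
    · obtain ⟨h1, h2, h3⟩ := h
      rw [← Finset.mem_union] at h1 h2
      rw [hk ξ h1 η h2 h3, hk η h2 ξ h1 h3.symm, hj_symm ξ h1 η h2 h3]
    · exact (if_neg h).trans (if_neg fun h' => h ⟨h'.2.1, h'.1, h'.2.2.symm⟩).symm
  · intro ξ hξ η hη hne
    rw [hk ξ hξ η hη hne]
    exact (hj_spec ξ hξ η hη hne).1
  · intro ξ hξ η hη hne
    rw [hk ξ hξ η hη hne]
    exact (hj_spec ξ hξ η hη hne).2.1
  · intro ξ hξ η hη hne
    rw [hk ξ hξ η hη hne]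
    exact (hj_spec ξ hξ η hη hne).2.2
  · intro ξ hξ
    ext x
    rw [Finset.mem_inter]
    exact ⟨fun h => (hE.mem_iff ξ hξ x h.2).1 h.1, fun h =>
      ⟨(hE.mem_iff ξ hξ x (p.h_sub ξ hξ h)).2 h, p.h_sub ξ hξ h⟩⟩
  · intro ξ hξ η hη hne
    exact (hk ξ (Finset.mem_union_left _ hξ) η (Finset.mem_union_left _ hη) hne).trans
      (hj1 ξ hξ η hη hne)
  · intro ξ hξ
    ext x
    rw [Finset.mem_inter]
    exact ⟨fun h => (hE'.mem_iff ξ hξ x h.2).1 h.1, fun h =>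
      ⟨(hE'.mem_iff ξ hξ x (p'.h_sub ξ hξ h)).2 h, p'.h_sub ξ hξ h⟩⟩
  · intro ξ hξ η hη hne
    exact (hk ξ (Finset.mem_union_right _ hξ) η (Finset.mem_union_right _ hη) hne).trans
      (hj2 ξ hξ η hη hne)
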